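/- arXiv:2507.09803 — 2 statements merged into one kernel-verified Lean document; each statement's English description precedes it below -/
import Mathlib

section
/- Let p₁, α₁, ξ₁₀ ∈ ℂ with p₁ ≠ 0 and p₁ + conj(p₁) ≠ 0, and let a ∈ ℝ, a ≠ 0, with 1 − a·p₁ ≠ 0 and 1 + a·conj(p₁) ≠ 0. Set ξ₁(t) = −t/p₁ + ξ₁₀, ξ₁*(t) = −t/conj(p₁) + conj(ξ₁₀), f_k(t) = 1 + (i·p₁·α₁·conj(α₁)/(p₁+conj(p₁))²)·((1−a·p₁)/(1+a·conj(p₁)))^{−k}·exp(ξ₁+ξ₁*), f̃_k(t) = 1 − (i·conj(p₁)·α₁·conj(α₁)/(p₁+conj(p₁))²)·((1−a·p₁)/(1+a·conj(p₁)))^{−k}·exp(ξ₁+ξ₁*), g_k(t) = (i·conj(α₁)/p₁)·(1−a·p₁)^{−k}·exp(ξ₁), g̃_k(t) = −(i·α₁/conj(p₁))·(1+a·conj(p₁))^{k}·exp(ξ₁*), h_k(t) = conj(α₁)·(1−a·p₁)^{−k}·exp(ξ₁), h̃_k(t) = α₁·(1+a·conj(p₁))^{k}·exp(ξ₁*), and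 define u_k = g_k/f̃_k, v_k = h_k/f_k, ũ_k = g̃_k/f_k, ṽ_k = h̃_k/f̃_k. Then for every k ∈ ℤ and t ∈ ℝ at which f_k(t), f̃_k(t), f_{k+1}(t), f̃_{k+1}(t) are all nonzero: (i/a)(u_{k+1}(t) − u_k(t)) + v_{k+1}(t) + u_{k+1}(t) v_{k+1}(t) ṽ_k(t) = 0 and i·(d/dt)v_k(t) + u_k(t) + v_k(t) u_k(t) ũ_k(t) = 0. -/
/-!
Write `q` for `conj p`. The denominators of the soliton belong to one family of tau functions
`τₙ = 1 + (-p/q)ⁿ z`, namely `f = τ₀` and `f̃ = τ₋₁`, where `z` is proportional to the product of a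
plane wave in `p` and a plane wave in `q`. A step of the lattice multiplies `z` by
`(1 + a q) / (1 - a p)`, and the time flow gives `z' = -(1/p + 1/q) z`. Hence (with `⁺` for the
next lattice site) the differences `τₙ² - τₙ₋₁ τₙ₊₁` and `τₙ τₙ⁺ - τₙ₋₁ τₙ₊₁⁺` are multiples of
`z`, and these two bilinear identities absorb the cubic terms of the model. What remains are two
contiguity relations, linear in the `τₙ`: one for the lattice shift, one for the time derivative.
-/

section Tau

variable {K : Type*} [Field K] {p q a z : K}

/-- The tau functions of the one-soliton as functions of the phase `z` and of the index `n` of the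
Toda-type chain to which they belong. The paper's `f` and `f̃` are the members with index `0` and
`-1`; those with index `1` and `-2` occur only in the bilinear identities. -/
def solitonTau (p q z : K) (n : ℤ) : K :=
  1 + (-p / q) ^ n * z

lemma solitonTau_zero : solitonTau p q z 0 = 1 + z := by
  simp [solitonTau]

lemma solitonTau_neg_one : solitonTau p q z (-1) = 1 - q / p * z := by
  simp [solitonTau, div_neg, sub_eq_add_neg]

lemma solitonTau_add_one (hp : p ≠ 0) (hq : q ≠ 0) (n : ℤ) :
    solitonTau p q z (n + 1) = 1 - p / q * ((-p / q) ^ n * z) := by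
  rw [solitonTau, zpow_add_one₀ (div_ne_zero (neg_ne_zero.mpr hp) hq)]
  ring

lemma solitonTau_sub_one (hp : p ≠ 0) (hq : q ≠ 0) (n : ℤ) :
    solitonTau p q z (n - 1) = 1 - q / p * ((-p / q) ^ n * z) := by
  rw [solitonTau, zpow_sub_one₀ (div_ne_zero (neg_ne_zero.mpr hp) hq), inv_div, div_neg]
  ring

lemma solitonTau_sq (hp : p ≠ 0) (hq : q ≠ 0) (n : ℤ) :
    solitonTau p q z n ^ 2 = solitonTau p q z (n - 1) * solitonTau p q z (n + 1)
      + (p + q) ^ 2 / (p * q) * ((-p / q) ^ n * z) := by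
  rw [solitonTau_add_one hp hq, solitonTau_sub_one hp hq, solitonTau]
  generalize (-p / q) ^ n * z = e
  field_simp
  ring

lemma solitonTau_mul_shift (hp : p ≠ 0) (hq : q ≠ 0) (h1 : 1 - a * p ≠ 0) (n : ℤ) :
    solitonTau p q z n * solitonTau p q ((1 + a * q) / (1 - a * p) * z) n
      = solitonTau p q z (n - 1) * solitonTau p q ((1 + a * q) / (1 - a * p) * z) (n + 1)
        + (p + q) ^ 2 / (p * q * (1 - a * p)) * ((-p / q) ^ n * z) := by
  rw [solitonTau_add_one hp hq, solitonTau_sub_one hp hq, solitonTau, solitonTau,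
    mul_left_comm ((-p / q) ^ n)]
  generalize (-p / q) ^ n * z = e
  field_simp
  ring

lemma solitonTau_sub_mul_shift (hp : p ≠ 0) (hq : q ≠ 0) (h1 : 1 - a * p ≠ 0) (n : ℤ) :
    solitonTau p q z n - (1 - a * p) * solitonTau p q ((1 + a * q) / (1 - a * p) * z) n
      = a * p * solitonTau p q z (n - 1) := by
  rw [solitonTau_sub_one hp hq, solitonTau, solitonTau, mul_left_comm ((-p / q) ^ n)]
  generalize (-p / q) ^ n * z = e
  field_simp
  ring

end Tau

lemma hasDerivAt_div_solitonTau {𝕜 K : Type*} [NontriviallyNormedField 𝕜]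
    [NontriviallyNormedField K] [NormedAlgebra 𝕜 K] {p q : K} {x z : 𝕜 → K} {t : 𝕜}
    (hp : p ≠ 0) (hq : q ≠ 0) (n : ℤ)
    (hx : HasDerivAt x (-1 / p * x t) t) (hz : HasDerivAt z ((-1 / p + -1 / q) * z t) t)
    (hτ : solitonTau p q (z t) n ≠ 0) :
    HasDerivAt (fun s ↦ x s / solitonTau p q (z s) n)
      (-(x t / p) * solitonTau p q (z t) (n + 1) / solitonTau p q (z t) n ^ 2) t := by
  have dτ : HasDerivAt (fun s ↦ solitonTau p q (z s) n)
      ((-p / q) ^ n * ((-1 / p + -1 / q) * z t)) t := (hz.const_mul _).const_add 1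
  refine (hx.fun_div dτ hτ).congr_deriv ?_
  congr 1
  rw [solitonTau_add_one hp hq, solitonTau]
  generalize (-p / q) ^ n = r
  field_simp
  ring

section Bilinear

variable {K : Type*} [Field K]

lemma discrete_MT_of_bilinear {c f' ft ft' g g' h' ht w : K}
    (hf' : f' ≠ 0) (hft : ft ≠ 0) (hft' : ft' ≠ 0)
    (hshift : c * (g' * ft - g * ft') + h' * w = 0) (hw : ft * ft' + g' * ht = w * f') :
    c * (g' / ft' - g / ft) + h' / f' + g' / ft' * (h' / f') * (ht / ft) = 0 := by
  calc c * (g' / ft' - g / ft) + h' / f' + g' / ft' * (h' / f') * (ht / ft)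
      = (c * (g' * ft - g * ft') + h' * (ft * ft' + g' * ht) / f') / (ft * ft') := by
        field_simp
        ring
    _ = 0 := by rw [hw, ← mul_assoc, mul_div_cancel_right₀ _ hf', hshift, zero_div]

lemma continuous_MT_of_bilinear {c f ft g gt h w : K} (hf : f ≠ 0) (hft : ft ≠ 0)
    (hderiv : c + g * w = 0) (hw : f ^ 2 + h * gt = ft * w) :
    c / f ^ 2 + g / ft + h / f * (g / ft) * (gt / f) = 0 := by
  calc c / f ^ 2 + g / ft + h / f * (g / ft) * (gt / f)
      = (c + g * (f ^ 2 + h * gt) / ft) / f ^ 2 := by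
        field_simp
        ring
    _ = 0 := by rw [hw, mul_left_comm, mul_div_cancel_left₀ _ hft, hderiv, zero_div]

end Bilinear

section OneSoliton

variable {K : Type*} [Field K] {i p q a α β x y z : K}

lemma oneSoliton_discrete_MT (hi : i ^ 2 = -1) (hp : p ≠ 0) (hq : q ≠ 0) (ha : a ≠ 0)
    (h1 : 1 - a * p ≠ 0) {x' z' : K} (hx' : x' = x / (1 - a * p))
    (hz' : z' = (1 + a * q) / (1 - a * p) * z)
    (hz : (p + q) ^ 2 * z = i * p * α * β * (x * y))
    (hf' : solitonTau p q z' 0 ≠ 0) (hft : solitonTau p q z (-1) ≠ 0)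
    (hft' : solitonTau p q z' (-1) ≠ 0) :
    i / a * (i * β / p * x' / solitonTau p q z' (-1) - i * β / p * x / solitonTau p q z (-1))
      + β * x' / solitonTau p q z' 0
      + i * β / p * x' / solitonTau p q z' (-1) * (β * x' / solitonTau p q z' 0)
        * (α * y / solitonTau p q z (-1)) = 0 := by
  subst hx' hz'
  refine discrete_MT_of_bilinear (w := solitonTau p q z (-1 - 1)) hf' hft hft' ?_ ?_
  · have hτ := solitonTau_sub_mul_shift (z := z) hp hq h1 (-1)
    calc _ = i ^ 2 * (β * x / (a * p * (1 - a * p))) * (solitonTau p q z (-1)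
            - (1 - a * p) * solitonTau p q ((1 + a * q) / (1 - a * p) * z) (-1))
          + β * (x / (1 - a * p)) * solitonTau p q z (-1 - 1) := by
          field_simp
      _ = 0 := by
          rw [hτ, hi]
          field_simp
          ring
  · rw [solitonTau_mul_shift hp hq h1, neg_add_cancel, add_assoc, add_eq_left, zpow_neg_one,
      inv_div, div_neg]
    calc _ = (i * p * α * β * (x * y) - (p + q) ^ 2 * z) / (p ^ 2 * (1 - a * p)) := by
          field_simp
          ring
      _ = 0 := by rw [hz, sub_self, zero_div]

lemma oneSoliton_continuous_MT (hp : p ≠ 0) (hq : q ≠ 0)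
    (hz : (p + q) ^ 2 * z = i * p * α * β * (x * y))
    (hf : solitonTau p q z 0 ≠ 0) (hft : solitonTau p q z (-1) ≠ 0) :
    i * (-(β * x / p) * solitonTau p q z 1 / solitonTau p q z 0 ^ 2)
      + i * β / p * x / solitonTau p q z (-1)
      + β * x / solitonTau p q z 0 * (i * β / p * x / solitonTau p q z (-1))
        * (-(i * α / q) * y / solitonTau p q z 0) = 0 := by
  rw [← mul_div_assoc]
  refine continuous_MT_of_bilinear (w := solitonTau p q z 1) hf hft (by ring) ?_
  rw [solitonTau_sq hp hq, zpow_zero, one_mul, zero_sub, zero_add, add_assoc, add_eq_left]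
  calc _ = ((p + q) ^ 2 * z - i * p * α * β * (x * y)) / (p * q) := by
        field_simp
        ring
    _ = 0 := by rw [hz, sub_self, zero_div]

end OneSoliton

section PlaneWave

open Complex

/-- The elementary solution with spectral parameter `p` of the linear lattice and time flows.
The conjugate wave, whose lattice factor is `(1 + a q)ᵏ`, is `planeWave (-a) q η₀ (-k)`. -/
noncomputable def planeWave (a p ξ₀ : ℂ) (k : ℤ) (t : ℝ) : ℂ :=
  (1 - a * p) ^ (-k) * exp (-(t : ℂ) / p + ξ₀)

/-- The phase `z` whose tau functions are the denominators of the soliton; its constant factor is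
the one for which `τ₀ = 1 + z` is the paper's `f`. -/
noncomputable def solitonPhase (a p q α β ξ₀ η₀ : ℂ) (k : ℤ) (t : ℝ) : ℂ :=
  I * p * α * β / (p + q) ^ 2 * (planeWave a p ξ₀ k t * planeWave (-a) q η₀ (-k) t)

variable {a p q : ℂ} (α β ξ₀ η₀ : ℂ) (k : ℤ) (t : ℝ)

lemma planeWave_add_one (h1 : 1 - a * p ≠ 0) :
    planeWave a p ξ₀ (k + 1) t = planeWave a p ξ₀ k t / (1 - a * p) := by
  rw [planeWave, planeWave, neg_add, ← sub_eq_add_neg, zpow_sub_one₀ h1]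
  ring

lemma planeWave_sub_one (h1 : 1 - a * p ≠ 0) :
    planeWave a p ξ₀ (k - 1) t = (1 - a * p) * planeWave a p ξ₀ k t := by
  rw [planeWave, planeWave, neg_sub', sub_neg_eq_add, zpow_add_one₀ h1]
  ring

lemma planeWave_neg_neg :
    planeWave (-a) q η₀ (-k) t = (1 + a * q) ^ k * exp (-(t : ℂ) / q + η₀) := by
  rw [planeWave, neg_neg, neg_mul, sub_neg_eq_add]

lemma hasDerivAt_planeWave :
    HasDerivAt (planeWave a p ξ₀ k) (-1 / p * planeWave a p ξ₀ k t) t := by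
  have dξ : HasDerivAt (fun s : ℝ ↦ -(s : ℂ) / p + ξ₀) (-1 / p) t :=
    (ofRealCLM.hasDerivAt.neg.div_const p).add_const ξ₀
  exact (dξ.cexp.const_mul ((1 - a * p) ^ (-k))).congr_deriv (by rw [planeWave]; ring)

lemma solitonPhase_add_one (h1 : 1 - a * p ≠ 0) (h2 : 1 + a * q ≠ 0) :
    solitonPhase a p q α β ξ₀ η₀ (k + 1) t
      = (1 + a * q) / (1 - a * p) * solitonPhase a p q α β ξ₀ η₀ k t := by
  have hy : planeWave (-a) q η₀ (-(k + 1)) t = (1 + a * q) * planeWave (-a) q η₀ (-k) t := by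
    rw [neg_add', planeWave_sub_one _ _ _ (by simpa using h2), neg_mul, sub_neg_eq_add]
  rw [solitonPhase, solitonPhase, planeWave_add_one _ _ _ h1, hy]
  ring

lemma hasDerivAt_solitonPhase :
    HasDerivAt (solitonPhase a p q α β ξ₀ η₀ k)
      ((-1 / p + -1 / q) * solitonPhase a p q α β ξ₀ η₀ k t) t := by
  refine (((hasDerivAt_planeWave ξ₀ k t).mul (hasDerivAt_planeWave η₀ (-k) t)).const_mul
    (I * p * α * β / (p + q) ^ 2)).congr_deriv ?_
  rw [solitonPhase]
  ring

lemma sq_mul_solitonPhase (hpq : p + q ≠ 0) :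
    (p + q) ^ 2 * solitonPhase a p q α β ξ₀ η₀ k t
      = I * p * α * β * (planeWave a p ξ₀ k t * planeWave (-a) q η₀ (-k) t) := by
  rw [solitonPhase]
  field_simp

lemma solitonPhase_eq_zpow_mul_exp :
    solitonPhase a p q α β ξ₀ η₀ k t = I * p * α * β / (p + q) ^ 2
      * ((1 - a * p) / (1 + a * q)) ^ (-k) * exp (-(t : ℂ) / p + ξ₀ + (-(t : ℂ) / q + η₀)) := by
  rw [solitonPhase, planeWave_neg_neg, planeWave, exp_add (_ + _), div_zpow,
    zpow_neg (1 + a * q), div_inv_eq_mul]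
  ring

lemma solitonTau_zero_solitonPhase :
    solitonTau p q (solitonPhase a p q α β ξ₀ η₀ k t) 0
      = 1 + I * p * α * β / (p + q) ^ 2 * ((1 - a * p) / (1 + a * q)) ^ (-k)
        * exp (-(t : ℂ) / p + ξ₀ + (-(t : ℂ) / q + η₀)) := by
  rw [solitonTau_zero, solitonPhase_eq_zpow_mul_exp]

lemma solitonTau_neg_one_solitonPhase (hp : p ≠ 0) :
    solitonTau p q (solitonPhase a p q α β ξ₀ η₀ k t) (-1)
      = 1 - I * q * α * β / (p + q) ^ 2 * ((1 - a * p) / (1 + a * q)) ^ (-k)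
        * exp (-(t : ℂ) / p + ξ₀ + (-(t : ℂ) / q + η₀)) := by
  rw [solitonTau_neg_one, solitonPhase_eq_zpow_mul_exp]
  field_simp

lemma hasDerivAt_planeWave_div_solitonTau (hp : p ≠ 0) (hq : q ≠ 0) (n : ℤ)
    (hτ : solitonTau p q (solitonPhase a p q α β ξ₀ η₀ k t) n ≠ 0) :
    HasDerivAt
      (fun s ↦ β * planeWave a p ξ₀ k s / solitonTau p q (solitonPhase a p q α β ξ₀ η₀ k s) n)
      (-(β * planeWave a p ξ₀ k t / p)
        * solitonTau p q (solitonPhase a p q α β ξ₀ η₀ k t) (n + 1)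
        / solitonTau p q (solitonPhase a p q α β ξ₀ η₀ k t) n ^ 2) t :=
  hasDerivAt_div_solitonTau hp hq n
    (((hasDerivAt_planeWave ξ₀ k t).const_mul β).congr_deriv (mul_left_comm _ _ _))
    (hasDerivAt_solitonPhase α β ξ₀ η₀ k t) hτ

end PlaneWave

theorem semi_discrete_MT_one_soliton_general
    (p q α β ξ₀ η₀ a : ℂ) (hp : p ≠ 0) (hq : q ≠ 0) (hpq : p + q ≠ 0) (ha : a ≠ 0)
    (h1 : 1 - a * p ≠ 0) (h2 : 1 + a * q ≠ 0)
    (ξ ξs : ℝ → ℂ)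
    (hξ : ∀ t : ℝ, ξ t = -(t : ℂ) / p + ξ₀)
    (hξs : ∀ t : ℝ, ξs t = -(t : ℂ) / q + η₀)
    (f ft g gt h ht : ℤ → ℝ → ℂ)
    (hf : ∀ (k : ℤ) (t : ℝ), f k t =
      1 + (Complex.I * p * α * β / (p + q) ^ 2) * ((1 - a * p) / (1 + a * q)) ^ (-k) *
        Complex.exp (ξ t + ξs t))
    (hft : ∀ (k : ℤ) (t : ℝ), ft k t =
      1 - (Complex.I * q * α * β / (p + q) ^ 2) * ((1 - a * p) / (1 + a * q)) ^ (-k) *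
        Complex.exp (ξ t + ξs t))
    (hg : ∀ (k : ℤ) (t : ℝ), g k t =
      (Complex.I * β / p) * (1 - a * p) ^ (-k) * Complex.exp (ξ t))
    (hgt : ∀ (k : ℤ) (t : ℝ), gt k t =
      -(Complex.I * α / q) * (1 + a * q) ^ k * Complex.exp (ξs t))
    (hh : ∀ (k : ℤ) (t : ℝ), h k t = β * (1 - a * p) ^ (-k) * Complex.exp (ξ t))
    (hht : ∀ (k : ℤ) (t : ℝ), ht k t = α * (1 + a * q) ^ k * Complex.exp (ξs t))
    (u v ut vt : ℤ → ℝ → ℂ)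
    (hu : ∀ k t, u k t = g k t / ft k t)
    (hv : ∀ k t, v k t = h k t / f k t)
    (hut : ∀ k t, ut k t = gt k t / f k t)
    (hvt : ∀ k t, vt k t = ht k t / ft k t) (k : ℤ) (t : ℝ) :
    (ft k t ≠ 0 → f (k + 1) t ≠ 0 → ft (k + 1) t ≠ 0 →
      (Complex.I / a) * (u (k + 1) t - u k t) + v (k + 1) t
        + u (k + 1) t * v (k + 1) t * vt k t = 0) ∧
    (f k t ≠ 0 → ft k t ≠ 0 →
      Complex.I * deriv (v k) t + u k t + v k t * u k t * ut k t = 0) := by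
  have hfτ (k t) : f k t = solitonTau p q (solitonPhase a p q α β ξ₀ η₀ k t) 0 := by
    rw [hf, hξ, hξs, solitonTau_zero_solitonPhase]
  have hftτ (k t) : ft k t = solitonTau p q (solitonPhase a p q α β ξ₀ η₀ k t) (-1) := by
    rw [hft, hξ, hξs, solitonTau_neg_one_solitonPhase _ _ _ _ _ _ hp]
  have hgx (k t) : g k t = Complex.I * β / p * planeWave a p ξ₀ k t := by
    rw [hg, hξ, planeWave, mul_assoc]
  have hhx (k t) : h k t = β * planeWave a p ξ₀ k t := by rw [hh, hξ, planeWave, mul_assoc]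
  have hgty : gt k t = -(Complex.I * α / q) * planeWave (-a) q η₀ (-k) t := by
    rw [hgt, hξs, planeWave_neg_neg, mul_assoc]
  have hhty : ht k t = α * planeWave (-a) q η₀ (-k) t := by
    rw [hht, hξs, planeWave_neg_neg, mul_assoc]
  have hvτ (k) : v k = fun s ↦ β * planeWave a p ξ₀ k s
      / solitonTau p q (solitonPhase a p q α β ξ₀ η₀ k s) 0 :=
    funext fun s ↦ by rw [hv, hhx, hfτ]
  have hz := sq_mul_solitonPhase (a := a) α β ξ₀ η₀ k t hpq
  simp only [hu, hvτ, hvt, hut, hgx, hgty, hhty, hftτ, hfτ]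
  refine ⟨fun nft nf' nft' ↦ ?_, fun nf nft ↦ ?_⟩
  · exact oneSoliton_discrete_MT Complex.I_sq hp hq ha h1 (planeWave_add_one ξ₀ k t h1)
      (solitonPhase_add_one α β ξ₀ η₀ k t h1 h2) hz nf' nft nft'
  · rw [(hasDerivAt_planeWave_div_solitonTau α β ξ₀ η₀ k t hp hq 0 nf).deriv]
    exact oneSoliton_continuous_MT hp hq hz nf nft

/-- The one-soliton formulas solve the semi-discrete massive Thirring model. -/
theorem semi_discrete_MT_one_soliton
    (p₁ α₁ ξ₁₀ : ℂ) (hp : p₁ ≠ 0) (hps : p₁ + starRingEnd ℂ p₁ ≠ 0)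
    (a : ℝ) (ha : a ≠ 0)
    (h1 : 1 - (a : ℂ) * p₁ ≠ 0) (h2 : 1 + (a : ℂ) * starRingEnd ℂ p₁ ≠ 0)
    (ξ ξs : ℝ → ℂ)
    (hξ : ∀ t : ℝ, ξ t = -(t : ℂ) / p₁ + ξ₁₀)
    (hξs : ∀ t : ℝ, ξs t = -(t : ℂ) / starRingEnd ℂ p₁ + starRingEnd ℂ ξ₁₀)
    (f ft g gt h ht : ℤ → ℝ → ℂ)
    (hf : ∀ (k : ℤ) (t : ℝ), f k t =
      1 + (Complex.I * p₁ * α₁ * starRingEnd ℂ α₁ / (p₁ + starRingEnd ℂ p₁) ^ 2) *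
        ((1 - (a : ℂ) * p₁) / (1 + (a : ℂ) * starRingEnd ℂ p₁)) ^ (-k) *
        Complex.exp (ξ t + ξs t))
    (hft : ∀ (k : ℤ) (t : ℝ), ft k t =
      1 - (Complex.I * starRingEnd ℂ p₁ * α₁ * starRingEnd ℂ α₁ /
          (p₁ + starRingEnd ℂ p₁) ^ 2) *
        ((1 - (a : ℂ) * p₁) / (1 + (a : ℂ) * starRingEnd ℂ p₁)) ^ (-k) *
        Complex.exp (ξ t + ξs t))
    (hg : ∀ (k : ℤ) (t : ℝ), g k t =
      (Complex.I * starRingEnd ℂ α₁ / p₁) * (1 - (a : ℂ) * p₁) ^ (-k) * Complex.exp (ξ t))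
    (hgt : ∀ (k : ℤ) (t : ℝ), gt k t =
      -(Complex.I * α₁ / starRingEnd ℂ p₁) * (1 + (a : ℂ) * starRingEnd ℂ p₁) ^ k *
        Complex.exp (ξs t))
    (hh : ∀ (k : ℤ) (t : ℝ), h k t =
      starRingEnd ℂ α₁ * (1 - (a : ℂ) * p₁) ^ (-k) * Complex.exp (ξ t))
    (hht : ∀ (k : ℤ) (t : ℝ), ht k t =
      α₁ * (1 + (a : ℂ) * starRingEnd ℂ p₁) ^ k * Complex.exp (ξs t))
    (u v ut vt : ℤ → ℝ → ℂ)
    (hu : ∀ k t, u k t = g k t / ft k t)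
    (hv : ∀ k t, v k t = h k t / f k t)
    (hut : ∀ k t, ut k t = gt k t / f k t)
    (hvt : ∀ k t, vt k t = ht k t / ft k t) :
    ∀ (k : ℤ) (t : ℝ), f k t ≠ 0 → ft k t ≠ 0 → f (k + 1) t ≠ 0 → ft (k + 1) t ≠ 0 →
      (Complex.I / (a : ℂ)) * (u (k + 1) t - u k t) + v (k + 1) t
        + u (k + 1) t * v (k + 1) t * vt k t = 0 ∧
      Complex.I * deriv (v k) t + u k t + v k t * u k t * ut k t = 0 := by
  intro k t nf nft nf' nft'
  have hq : starRingEnd ℂ p₁ ≠ 0 := by simpa using hp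
  exact (semi_discrete_MT_one_soliton_general p₁ (starRingEnd ℂ p₁) α₁ (starRingEnd ℂ α₁) ξ₁₀
    (starRingEnd ℂ ξ₁₀) a hp hq hps (by exact_mod_cast ha) h1 h2 ξ ξs hξ hξs f ft g gt h ht
    hf hft hg hgt hh hht u v ut vt hu hv hut hvt k t).imp (· nft nf' nft') (· nf nft)
end

section
/- Let N ≥ 1, let p_1,…,p_N, p̄_1,…,p̄_N, q_1,…,q_N, q̄_1,…,q̄_N ∈ ℂ be nonzero with p_i + p̄_j ≠ 0 and q_i + q̄_j ≠ 0 for all i,j, let μ, ν, ξ_{i0}, ξ̄_{j0}, η_{i0}, η̄_{j0} ∈ ℂ, let a₁, a₂ ∈ ℝ be nonzero with 1 − a₁ p_i ≠ 0, 1 + a₁ p̄_j ≠ 0, 1 − a₂ q_i ≠ 0, 1 + a₂ q̄_j ≠ 0 for all i,j, and let x₋₁, y₋₁ ∈ ℝ. Set ξ_i = x₋₁/p_i + ξ_{i0}, ξ̄_j = x₋₁/p̄_j + ξ̄_{j0}, η_i = y₋₁/q_i + η_{i0}, η̄_j = y₋₁/q̄_j + η̄_{j0}. For n, k₁, m, k₂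 ∈ ℤ define: A(n,k₁) the N×N matrix with entry a_{ij} = (μ p̄_j/(p_i+p̄_j))·(−p_i/p̄_j)^n·((1−a₁p_i)/(1+a₁p̄_j))^{−k₁}·exp(ξ_i+ξ̄_j); B(m,k₂) with entry b_{ij} = (ν/(q_i+q̄_j))·(−q_i/q̄_j)^m·((1−a₂q_i)/(1+a₂q̄_j))^{−k₂}·exp(η_i+η̄_j); the row vector Φ(n,k₁) with j-th entry p_j^n (1−a₁p_j)^{−k₁} exp(ξ_j); the row vector Ψ̄(m,k₂) with j-th entry (−q̄_j)^{−m}(1+a₂q̄_j)^{k₂} exp(η̄_j). Set f^{m,k₂}_{n,k₁} = det[[A(n,k₁), I],[−I, B(m,k₂)]] and g^{m,k₂}_{n,k₁} = det[[A(n,k₁), I, Φ(n,k₁)ᵀ],[−I, B(m,k₂), 0],[0, −Ψ̄(m,k₂), 0]]. Then for all n, k₁, m, k₂ ∈ ℤ: (1/a₁)·(g^{m+1,k₂}_{n,k₁+1}·f^{m,k₂}_{n+1,k₁} − g^{m+1,k₂}_{n,k₁}·f^{m,k₂}_{n+1,k₁+1}) = g^{m+1,k₂}_{n+1,k₁+1}·f^{m,k₂}_{n,k₁}.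 -/
open Matrix

/-- Determinant of the 2N×2N block matrix `[[A, I], [−I, B]]`. -/
noncomputable def blockDet {N : ℕ} (A B : Matrix (Fin N) (Fin N) ℂ) : ℂ :=
  (Matrix.fromBlocks A (1 : Matrix (Fin N) (Fin N) ℂ)
    (-1 : Matrix (Fin N) (Fin N) ℂ) B).det

/-- Determinant of the bordered (2N+1)×(2N+1) matrix obtained from the block matrix
`[[A, I], [−I, B]]` by appending the column vector `col` on the right and the row
vector `row` at the bottom, with `0` in the corner. -/
noncomputable def borderedDet {N : ℕ} (A B : Matrix (Fin N) (Fin N) ℂ)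
    (col row : (Fin N ⊕ Fin N) → ℂ) : ℂ :=
  (Matrix.fromBlocks
    (Matrix.fromBlocks A (1 : Matrix (Fin N) (Fin N) ℂ)
      (-1 : Matrix (Fin N) (Fin N) ℂ) B)
    (Matrix.of fun i (_ : Fin 1) => col i)
    (Matrix.of fun (_ : Fin 1) j => row j)
    (0 : Matrix (Fin 1) (Fin 1) ℂ)).det

/-!
Every shift of the lattice variables perturbs a Gram matrix by a rank-one matrix: the increment of
the numerator of an entry contains its denominator `p i + p̄ j` as a factor. For the shift of `m` in
`B` the row of this perturbation is `Ψ̄(m + 1)`, which is already the border of `g` and so does not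
change `g`. The equation thus compares one matrix `M` with its perturbations `M + u vᵀ` and
`M + w vᵀ`, where `u` and `w = u + a₁ s` are `Φ(n, k₁)` and `Φ(n, k₁ + 1)`, and
`s = Φ(n + 1, k₁ + 1)`. A bordered determinant with zero corner is `-r ⬝ᵥ adj(M) *ᵥ c`; working with
adjugates instead of inverses, the matrix determinant lemma gives the equation also where `M` is
singular.
-/

section BorderedDeterminants

variable {ι R : Type*} [Fintype ι] [DecidableEq ι] [CommRing R]

theorem det_fromBlocks_replicateCol_replicateRow_single (M : Matrix ι ι R) (c : ι → R) (j : ι) :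
    (fromBlocks M (replicateCol (Fin 1) c) (replicateRow (Fin 1) (Pi.single j 1)) 0).det =
      -(M.updateCol j c).det := by
  have swap_cols :
      (fromBlocks M (replicateCol (Fin 1) c) (replicateRow (Fin 1) (Pi.single j 1)) 0).submatrix id
          (Equiv.swap (Sum.inl j) (Sum.inr 0)) =
        fromBlocks (M.updateCol j c) (replicateCol (Fin 1) (M.col j)) 0 1 := by
    ext (i | i) (k | k)
    · obtain rfl | hk := eq_or_ne k j
      · simp
      · simp [hk, Equiv.swap_apply_of_ne_of_ne]
    · simp [Subsingleton.elim k 0]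
    · obtain rfl | hk := eq_or_ne k j
      · simp
      · simp [hk, Equiv.swap_apply_of_ne_of_ne]
    · simp [Subsingleton.elim k 0, Subsingleton.elim i 0]
  have h := congrArg det swap_cols
  rw [det_permute', Equiv.Perm.sign_swap (by simp), det_fromBlocks_zero₂₁, det_one, mul_one] at h
  simpa [neg_eq_iff_eq_neg] using h

theorem det_fromBlocks_replicateCol_replicateRow (M : Matrix ι ι R) (c r : ι → R)
    (D : Matrix (Fin 1) (Fin 1) R) :
    (fromBlocks M (replicateCol (Fin 1) c) (replicateRow (Fin 1) r) D).det =
      D 0 0 * M.det - r ⬝ᵥ M.adjugate *ᵥ c := by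
  set P := fromBlocks M (replicateCol (Fin 1) c) (replicateRow (Fin 1) r) D
  have updateRow_last (r' : ι → R) (d : Fin 1 → R) :
      P.updateRow (Sum.inr 0) (Sum.elim r' d) =
        fromBlocks M (replicateCol (Fin 1) c) (replicateRow (Fin 1) r') (of fun _ => d) := by
    ext (i | i) (k | k) <;> simp [P, updateRow_apply, Fin.eq_zero]
  have corner : P.adjugate (Sum.inr 0) (Sum.inr 0) = M.det := by
    have h_single : Pi.single (Sum.inr 0) 1 = Sum.elim (0 : ι → R) (Pi.single (0 : Fin 1) 1) := by
      ext (k | k) <;> simp [Pi.single_apply]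
    rw [adjugate_apply, h_single, updateRow_last, replicateRow_zero, det_fromBlocks_zero₂₁]
    simp
  have minor (j : ι) : P.adjugate (Sum.inl j) (Sum.inr 0) = -(M.adjugate *ᵥ c) j := by
    have h_single : Pi.single (Sum.inl j) 1 = Sum.elim (Pi.single j (1 : R)) (0 : Fin 1 → R) := by
      ext (k | k) <;> simp [Pi.single_apply]
    rw [adjugate_apply, h_single, updateRow_last, ← cramer_eq_adjugate_mulVec, cramer_apply]
    exact det_fromBlocks_replicateCol_replicateRow_single M c j
  rw [det_eq_sum_mul_adjugate_row _ (Sum.inr 0), Fintype.sum_sum_type]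
  simp [P, corner, minor, dotProduct, sub_eq_neg_add]

theorem det_add_vecMulVec (M : Matrix ι ι R) (u v : ι → R) :
    (M + vecMulVec u v).det = M.det + v ⬝ᵥ M.adjugate *ᵥ u := by
  have h := det_fromBlocks_replicateCol_replicateRow M u (-v) 1
  rw [det_fromBlocks_one₂₂] at h
  have h_neg : M - replicateCol (Fin 1) u * replicateRow (Fin 1) (-v) = M + vecMulVec u v := by
    ext i j
    simp [Matrix.mul_apply, vecMulVec_apply]
  simpa [h_neg] using h

theorem dotProduct_adjugate_add_vecMulVec_mulVec_left (M : Matrix ι ι R) (u v c : ι → R) :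
    v ⬝ᵥ (M + vecMulVec u v).adjugate *ᵥ c = v ⬝ᵥ M.adjugate *ᵥ c := by
  have h := det_add_vecMulVec (M + vecMulVec u v) c v
  rw [add_assoc, ← add_vecMulVec, det_add_vecMulVec, det_add_vecMulVec, mulVec_add,
    dotProduct_add] at h
  linear_combination -h

theorem dotProduct_adjugate_add_vecMulVec_mulVec_right (M : Matrix ι ι R) (u v r : ι → R) :
    r ⬝ᵥ (M + vecMulVec u v).adjugate *ᵥ u = r ⬝ᵥ M.adjugate *ᵥ u := by
  have h := det_add_vecMulVec (M + vecMulVec u v) u r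
  rw [add_assoc, ← vecMulVec_add, det_add_vecMulVec, det_add_vecMulVec, add_dotProduct] at h
  linear_combination -h

theorem det_mul_dotProduct_adjugate_add_vecMulVec_mulVec (M : Matrix ι ι R) (u v r s : ι → R) :
    M.det * (r ⬝ᵥ (M + vecMulVec u v).adjugate *ᵥ s) =
      (M + vecMulVec u v).det * (r ⬝ᵥ M.adjugate *ᵥ s) -
        (v ⬝ᵥ M.adjugate *ᵥ s) * (r ⬝ᵥ M.adjugate *ᵥ u) := by
  set y := (M + vecMulVec u v).adjugate *ᵥ s with hy
  have hvy : v ⬝ᵥ y = v ⬝ᵥ M.adjugate *ᵥ s :=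
    dotProduct_adjugate_add_vecMulVec_mulVec_left M u v s
  have hMy : M *ᵥ y = (M + vecMulVec u v).det • s - (v ⬝ᵥ y) • u := by
    have h : (M + vecMulVec u v) *ᵥ y = (M + vecMulVec u v).det • s := by
      rw [hy, mulVec_mulVec, mul_adjugate, smul_mulVec, one_mulVec]
    rw [← h, add_mulVec, vecMulVec_mulVec]
    simp
  calc M.det * (r ⬝ᵥ y) = r ⬝ᵥ M.adjugate *ᵥ (M *ᵥ y) := by
        rw [mulVec_mulVec, adjugate_mul, smul_mulVec, one_mulVec, dotProduct_smul, smul_eq_mul]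
    _ = _ := by
        rw [hMy, hvy, mulVec_sub, mulVec_smul, mulVec_smul, dotProduct_sub, dotProduct_smul,
          dotProduct_smul, smul_eq_mul, smul_eq_mul]

theorem dotProduct_adjugate_mulVec_mul_det_add_vecMulVec_sub (M : Matrix ι ι R)
    (u v r s : ι → R) (a : R) :
    (r ⬝ᵥ M.adjugate *ᵥ (u + a • s)) * (M + vecMulVec u v).det -
        (r ⬝ᵥ M.adjugate *ᵥ u) * (M + vecMulVec (u + a • s) v).det =
      a * ((r ⬝ᵥ (M + vecMulVec (u + a • s) v).adjugate *ᵥ s) * M.det) := by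
  have hs : r ⬝ᵥ (M + vecMulVec (u + a • s) v).adjugate *ᵥ s =
      r ⬝ᵥ (M + vecMulVec u v).adjugate *ᵥ s := by
    have h : M + vecMulVec (u + a • s) v = M + vecMulVec u v + vecMulVec s (a • v) := by
      rw [add_vecMulVec, smul_vecMulVec, vecMulVec_smul, add_assoc]
    rw [h, dotProduct_adjugate_add_vecMulVec_mulVec_right]
  have hrank_one := det_mul_dotProduct_adjugate_add_vecMulVec_mulVec M u v r s
  rw [hs, det_add_vecMulVec M (u + a • s) v]
  rw [det_add_vecMulVec M u v] at hrank_one ⊢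
  simp only [mulVec_add, mulVec_smul, dotProduct_add, dotProduct_smul, smul_eq_mul]
  linear_combination -a * hrank_one

end BorderedDeterminants

section TauFunctions

variable {ι R : Type*} [DecidableEq ι] [CommRing R]

/-- The block matrix `[[A, I], [−I, B]]` which couples the Gram matrices `A` and `B` of the two
components of the hierarchy. -/
def couplingMatrix (A B : Matrix ι ι R) : Matrix (ι ⊕ ι) (ι ⊕ ι) R :=
  fromBlocks A 1 (-1) B

theorem couplingMatrix_add_vecMulVec_left (A B : Matrix ι ι R) (u v : ι → R) :
    couplingMatrix (A + vecMulVec u v) B =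
      couplingMatrix A B + vecMulVec (Sum.elim u 0) (Sum.elim v 0) := by
  ext (i | i) (j | j) <;> simp [couplingMatrix, vecMulVec_apply]

theorem couplingMatrix_add_vecMulVec_right (A B : Matrix ι ι R) (u v : ι → R) :
    couplingMatrix A (B + vecMulVec u v) =
      couplingMatrix A B + vecMulVec (Sum.elim 0 u) (Sum.elim 0 v) := by
  ext (i | i) (j | j) <;> simp [couplingMatrix, vecMulVec_apply]

variable [Fintype ι]

/-- The tau function `f` of a pair of Gram matrices, over an arbitrary commutative ring. -/
def tauF (A B : Matrix ι ι R) : R :=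
  (couplingMatrix A B).det

/-- The tau function `g` of a pair of Gram matrices: the coupling matrix bordered by the column
`(φ, 0)` and the row `(0, −ψ)`, over an arbitrary commutative ring. -/
def tauG (A B : Matrix ι ι R) (φ ψ : ι → R) : R :=
  (fromBlocks (couplingMatrix A B) (replicateCol (Fin 1) (Sum.elim φ 0))
    (replicateRow (Fin 1) (Sum.elim 0 (-ψ))) 0).det

theorem tauG_eq_dotProduct (A B : Matrix ι ι R) (φ ψ : ι → R) :
    tauG A B φ ψ = Sum.elim 0 ψ ⬝ᵥ (couplingMatrix A B).adjugate *ᵥ Sum.elim φ 0 := by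
  have hψ : (Sum.elim 0 (-ψ) : ι ⊕ ι → R) = -(Sum.elim 0 ψ : ι ⊕ ι → R) := by
    ext (i | i) <;> simp
  rw [tauG, det_fromBlocks_replicateCol_replicateRow, hψ, neg_dotProduct, Matrix.zero_apply,
    zero_mul, zero_sub, neg_neg]

theorem tauG_add_vecMulVec_left (A B : Matrix ι ι R) (φ ψ v : ι → R) :
    tauG (A + vecMulVec φ v) B φ ψ = tauG A B φ ψ := by
  simp only [tauG_eq_dotProduct, couplingMatrix_add_vecMulVec_left,
    dotProduct_adjugate_add_vecMulVec_mulVec_right]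

theorem tauG_add_vecMulVec_right (A B : Matrix ι ι R) (φ ψ u : ι → R) :
    tauG A (B + vecMulVec u ψ) φ ψ = tauG A B φ ψ := by
  simp only [tauG_eq_dotProduct, couplingMatrix_add_vecMulVec_right,
    dotProduct_adjugate_add_vecMulVec_mulVec_left]

theorem tauG_mul_tauF_sub (A B : Matrix ι ι R) (φ ψ s v : ι → R) (a : R) :
    tauG A B (φ + a • s) ψ * tauF (A + vecMulVec φ v) B -
        tauG A B φ ψ * tauF (A + vecMulVec (φ + a • s) v) B =
      a * (tauG (A + vecMulVec (φ + a • s) v) B s ψ * tauF A B) := by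
  have hφ : (Sum.elim (φ + a • s) 0 : ι ⊕ ι → R) = Sum.elim φ 0 + a • Sum.elim s 0 := by
    ext (i | i) <;> simp
  simp only [tauG_eq_dotProduct, tauF, couplingMatrix_add_vecMulVec_left, hφ]
  exact dotProduct_adjugate_mulVec_mul_det_add_vecMulVec_sub _ _ _ _ _ a

end TauFunctions

section LatticeWaves

variable {ι K : Type*} [Field K]

/-- Solutions of the linear lattice equations of one component of the hierarchy, with spectral
parameters `p i` and lattice constant `a`: the first shift multiplies by `p`, and the backward
difference in the second variable is the first shift. -/
structure IsLatticeWave (p : ι → K) (a : K) (φ : ℤ → ℤ → ι → K) : Prop where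
  shift_left : ∀ n k, φ (n + 1) k = p * φ n k
  shift_right : ∀ n k, φ n (k + 1) = φ n k + a • φ (n + 1) (k + 1)

/-- The Gram matrix of the waves `φ` and `χ`, with spectral parameters `p` and `r`; the second wave
runs backwards on the lattice. With `r = -p̄` the denominators are the `p i + p̄ j` of the paper. -/
def gramMatrix (p r : ι → K) (φ χ : ℤ → ℤ → ι → K) (n k : ℤ) : Matrix ι ι K :=
  of fun i j => φ n k i * χ (-n) (-k) j / (p i - r j)

variable {p r : ι → K} {a : K} {φ χ : ℤ → ℤ → ι → K}

theorem IsLatticeWave.sub_one_right (hφ : IsLatticeWave p a φ) (n k : ℤ) :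
    φ n (k - 1) = φ n k - a • φ (n + 1) k := by
  have h := hφ.shift_right n (k - 1)
  rw [sub_add_cancel] at h
  rw [h, add_sub_cancel_right]

theorem gramMatrix_add_one_left (hpr : ∀ i j, p i ≠ r j) (hφ : IsLatticeWave p a φ)
    (hχ : IsLatticeWave r a χ) (n k : ℤ) :
    gramMatrix p r φ χ (n + 1) k =
      gramMatrix p r φ χ n k + vecMulVec (φ n k) (χ (-(n + 1)) (-k)) := by
  have hχ_left : χ (-n) (-k) = r * χ (-(n + 1)) (-k) := by
    rw [← hχ.shift_left, show -(n + 1) + 1 = -n by ring]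
  ext i j
  have hij : p i - r j ≠ 0 := sub_ne_zero.2 (hpr i j)
  simp only [gramMatrix, hφ.shift_left, hχ_left, of_apply, Matrix.add_apply, vecMulVec_apply,
    Pi.mul_apply]
  field_simp
  ring

theorem gramMatrix_add_one_right (hpr : ∀ i j, p i ≠ r j) (hφ : IsLatticeWave p a φ)
    (hχ : IsLatticeWave r a χ) (n k : ℤ) :
    gramMatrix p r φ χ n (k + 1) =
      gramMatrix p r φ χ n k + vecMulVec (φ n (k + 1)) (a • χ (-n) (-k)) := by
  have hφ_right : φ n k = φ n (k + 1) - a • (p * φ n (k + 1)) := by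
    rw [← hφ.shift_left, hφ.shift_right n k, add_sub_cancel_right]
  have hχ_right : χ (-n) (-(k + 1)) = χ (-n) (-k) - a • (r * χ (-n) (-k)) := by
    rw [← hχ.shift_left, neg_add', hχ.sub_one_right]
  ext i j
  have hij : p i - r j ≠ 0 := sub_ne_zero.2 (hpr i j)
  simp only [gramMatrix, hφ_right, hχ_right, of_apply, Matrix.add_apply, vecMulVec_apply,
    Pi.sub_apply, Pi.smul_apply, Pi.mul_apply, smul_eq_mul]
  field_simp
  ring

theorem gramMatrix_add_one_add_one (hpr : ∀ i j, p i ≠ r j) (hφ : IsLatticeWave p a φ)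
    (hχ : IsLatticeWave r a χ) (n k : ℤ) :
    gramMatrix p r φ χ (n + 1) (k + 1) =
      gramMatrix p r φ χ n k + vecMulVec (φ n (k + 1)) (χ (-(n + 1)) (-k)) := by
  have hχ_diag : χ (-(n + 1)) (-k) = a • χ (-n) (-k) + χ (-(n + 1)) (-(k + 1)) := by
    rw [neg_add' k, hχ.sub_one_right, show -(n + 1) + 1 = -n by ring, add_sub_cancel]
  rw [gramMatrix_add_one_left hpr hφ hχ, gramMatrix_add_one_right hpr hφ hχ, add_assoc,
    ← vecMulVec_add, ← hχ_diag]

theorem discrete_bilinear_k1_general [Fintype ι] [DecidableEq ι] {q t : ι → K} {b : K}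
    {η ψ : ℤ → ℤ → ι → K} (hpr : ∀ i j, p i ≠ r j) (hqt : ∀ i j, q i ≠ t j)
    (hφ : IsLatticeWave p a φ) (hχ : IsLatticeWave r a χ)
    (hη : IsLatticeWave q b η) (hψ : IsLatticeWave t b ψ) (n k m l : ℤ) :
    let A := gramMatrix p r φ χ
    let B := gramMatrix q t η ψ
    let f := fun m l n k => tauF (A n k) (B m l)
    let g := fun m l n k => tauG (A n k) (B m l) (φ n k) (ψ (-m) (-l))
    g (m + 1) l n (k + 1) * f m l (n + 1) k - g (m + 1) l n k * f m l (n + 1) (k + 1) =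
      a * (g (m + 1) l (n + 1) (k + 1) * f m l n k) := by
  intro A B f g
  have g_eq (n' k' : ℤ) :
      g (m + 1) l n' k' = tauG (A n' k') (B m l) (φ n' k') (ψ (-(m + 1)) (-l)) := by
    simp only [g, B, gramMatrix_add_one_left hqt hη hψ, tauG_add_vecMulVec_right]
  simp only [g_eq, f]
  simp only [A, gramMatrix_add_one_left hpr hφ hχ n k, gramMatrix_add_one_right hpr hφ hχ n k,
    gramMatrix_add_one_add_one hpr hφ hχ n k, tauG_add_vecMulVec_left]
  rw [hφ.shift_right n k]
  exact tauG_mul_tauF_sub _ _ _ _ _ _ a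

/-- The discrete exponentials of the paper, with spectral parameters `p i`, lattice constant `a` and
amplitudes `E i`. -/
def discreteExp (p : ι → K) (a : K) (E : ι → K) (n k : ℤ) : ι → K :=
  fun i => p i ^ n * (1 - a * p i) ^ (-k) * E i

theorem isLatticeWave_discreteExp (hp : ∀ i, p i ≠ 0) (ha : ∀ i, 1 - a * p i ≠ 0) (E : ι → K) :
    IsLatticeWave p a (discreteExp p a E) where
  shift_left n k := by
    ext i
    simp only [discreteExp, Pi.mul_apply, zpow_add_one₀ (hp i)]
    ring
  shift_right n k := by
    ext i
    have hk : (1 - a * p i) ^ (-k) = (1 - a * p i) ^ (-(k + 1)) * (1 - a * p i) := by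
      rw [← zpow_add_one₀ (ha i), show -(k + 1) + 1 = -k by ring]
    simp only [discreteExp, Pi.add_apply, Pi.smul_apply, smul_eq_mul, zpow_add_one₀ (hp i), hk]
    ring

theorem isLatticeWave_discreteExp_neg (hr : ∀ i, r i ≠ 0) (ha : ∀ i, 1 + a * r i ≠ 0)
    (E : ι → K) : IsLatticeWave (-r) a (discreteExp (-r) a E) :=
  isLatticeWave_discreteExp (by simpa using hr) (by simpa using ha) E

theorem gramMatrix_discreteExp_neg_apply (p r : ι → K) (a : K) (E F : ι → K) (n k : ℤ) (i j : ι) :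
    gramMatrix p (-r) (discreteExp p a E) (discreteExp (-r) a F) n k i j =
      E i * F j / (p i + r j) * (-p i / r j) ^ n *
        ((1 - a * p i) / (1 + a * r j)) ^ (-k) := by
  have hn : (-p i / r j) ^ n = p i ^ n * (-r j) ^ (-n) := by
    rw [neg_div, ← div_neg, div_zpow, _root_.zpow_neg, div_eq_mul_inv]
  have hk : ((1 - a * p i) / (1 + a * r j)) ^ (-k) =
      (1 - a * p i) ^ (-k) * (1 + a * r j) ^ k := by
    rw [div_zpow, _root_.zpow_neg (1 + a * r j), div_inv_eq_mul]
  simp only [gramMatrix, discreteExp, of_apply, Pi.neg_apply, mul_neg, sub_neg_eq_add, neg_neg, hn,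
    hk]
  ring

end LatticeWaves

/-- Discrete bilinear equation in the `k₁` direction for the Gram-type tau functions
of the two-component KP–Toda hierarchy. -/
theorem discrete_bilinear_k1 (N : ℕ) (hN : 1 ≤ N)
    (p pb q qb : Fin N → ℂ)
    (hp : ∀ i, p i ≠ 0) (hpb : ∀ i, pb i ≠ 0) (hq : ∀ i, q i ≠ 0) (hqb : ∀ i, qb i ≠ 0)
    (hppb : ∀ i j, p i + pb j ≠ 0) (hqqb : ∀ i j, q i + qb j ≠ 0)
    (μ ν : ℂ) (ξ0 ξb0 η0 ηb0 : Fin N → ℂ)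
    (a₁ a₂ : ℝ) (ha₁ : a₁ ≠ 0) (ha₂ : a₂ ≠ 0)
    (h1 : ∀ i, 1 - (a₁ : ℂ) * p i ≠ 0) (h2 : ∀ j, 1 + (a₁ : ℂ) * pb j ≠ 0)
    (h3 : ∀ i, 1 - (a₂ : ℂ) * q i ≠ 0) (h4 : ∀ j, 1 + (a₂ : ℂ) * qb j ≠ 0)
    (x y : ℝ)
    (ξ ξb η ηb : Fin N → ℂ)
    (hξ : ∀ i, ξ i = (x : ℂ) / p i + ξ0 i)
    (hξb : ∀ j, ξb j = (x : ℂ) / pb j + ξb0 j)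
    (hη : ∀ i, η i = (y : ℂ) / q i + η0 i)
    (hηb : ∀ j, ηb j = (y : ℂ) / qb j + ηb0 j)
    (A : ℤ → ℤ → Matrix (Fin N) (Fin N) ℂ)
    (hA : ∀ n k₁ i j, A n k₁ i j =
      (μ * pb j / (p i + pb j)) * (-(p i) / pb j) ^ n *
      ((1 - (a₁ : ℂ) * p i) / (1 + (a₁ : ℂ) * pb j)) ^ (-k₁) *
      Complex.exp (ξ i + ξb j))
    (B : ℤ → ℤ → Matrix (Fin N) (Fin N) ℂ)
    (hB : ∀ m k₂ i j, B m k₂ i j =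
      (ν / (q i + qb j)) * (-(q i) / qb j) ^ m *
      ((1 - (a₂ : ℂ) * q i) / (1 + (a₂ : ℂ) * qb j)) ^ (-k₂) *
      Complex.exp (η i + ηb j))
    (Φ : ℤ → ℤ → Fin N → ℂ)
    (hΦ : ∀ n k₁ j, Φ n k₁ j =
      p j ^ n * (1 - (a₁ : ℂ) * p j) ^ (-k₁) * Complex.exp (ξ j))
    (Ψb : ℤ → ℤ → Fin N → ℂ)
    (hΨb : ∀ m k₂ j, Ψb m k₂ j =
      (-(qb j)) ^ (-m) * (1 + (a₂ : ℂ) * qb j) ^ k₂ * Complex.exp (ηb j))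
    (f : ℤ → ℤ → ℤ → ℤ → ℂ)
    (hf : ∀ m k₂ n k₁, f m k₂ n k₁ = blockDet (A n k₁) (B m k₂))
    (g : ℤ → ℤ → ℤ → ℤ → ℂ)
    (hg : ∀ m k₂ n k₁, g m k₂ n k₁ = borderedDet (A n k₁) (B m k₂)
      (Sum.elim (Φ n k₁) (fun _ => 0))
      (Sum.elim (fun _ => 0) (fun j => -(Ψb m k₂ j)))) :
    ∀ n k₁ m k₂ : ℤ,
      (1 / (a₁ : ℂ)) * (g (m + 1) k₂ n (k₁ + 1) * f m k₂ (n + 1) k₁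
        - g (m + 1) k₂ n k₁ * f m k₂ (n + 1) (k₁ + 1))
      = g (m + 1) k₂ (n + 1) (k₁ + 1) * f m k₂ n k₁ := by
  intro n k₁ m k₂
  have hA' (n k) : A n k = gramMatrix p (-pb) (discreteExp p a₁ (Complex.exp ∘ ξ))
      (discreteExp (-pb) a₁ fun j => μ * pb j * Complex.exp (ξb j)) n k := by
    ext i j
    rw [hA, gramMatrix_discreteExp_neg_apply, Complex.exp_add, Function.comp_apply]
    ring
  have hB' (m k) : B m k = gramMatrix q (-qb) (discreteExp q a₂ fun i => ν * Complex.exp (η i))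
      (discreteExp (-qb) a₂ (Complex.exp ∘ ηb)) m k := by
    ext i j
    rw [hB, gramMatrix_discreteExp_neg_apply, Complex.exp_add, Function.comp_apply]
    ring
  have hΦ' (n k) : Φ n k = discreteExp p a₁ (Complex.exp ∘ ξ) n k := funext (hΦ n k)
  have hΨ' (m k) : Ψb m k = discreteExp (-qb) a₂ (Complex.exp ∘ ηb) (-m) (-k) := by
    ext j
    simp [hΨb, discreteExp]
  have hf' (m l n k) : f m l n k = tauF (A n k) (B m l) := hf m l n k
  have hg' (m l n k) : g m l n k = tauG (A n k) (B m l) (Φ n k) (Ψb m l) := hg m l n k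
  rw [one_div, inv_mul_eq_iff_eq_mul₀ (Complex.ofReal_ne_zero.2 ha₁)]
  simp only [hf', hg', hA', hB', hΦ', hΨ']
  exact discrete_bilinear_k1_general (by simpa [eq_neg_iff_add_eq_zero] using hppb)
    (by simpa [eq_neg_iff_add_eq_zero] using hqqb)
    (isLatticeWave_discreteExp hp h1 _) (isLatticeWave_discreteExp_neg hpb h2 _)
    (isLatticeWave_discreteExp hq h3 _) (isLatticeWave_discreteExp_neg hqb h4 _) n k₁ m k₂
end
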